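/- Let n, p ∈ ℕ, x₁,…,xₙ ∈ ℝᵖ, s₁,…,sₙ ≥ 0, m₁,…,mₙ ≥ 0, y₁,…,yₙ ∈ ℝ, uᵢ = yᵢ − mᵢ/2, and P : ℝᵖ → ℝ. Fix βₜ ∈ ℝᵖ and define Q(β) = Σᵢ sᵢ uᵢ xᵢᵀβ − (1/2) Σᵢ sᵢ ω(xᵢᵀβₜ, mᵢ)(xᵢᵀβ)² − P(β). If β′ ∈ ℝᵖ maximizes Q over ℝᵖ, then pℓ(β′) ≥ pℓ(βₜ), where pℓ(β) = Σᵢ sᵢ[yᵢ xᵢᵀβ − mᵢ log(1 + exp(xᵢᵀβ))] − P(β). That is, each EM update increases the penalized weighted log-likelihood. -/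

import Mathlib

open Matrix

/-- The Pólya-Gamma EM weight function: ω(t,m) = (m/(2t))·tanh(t/2) for t ≠ 0,
and ω(0,m) = m/4. -/
noncomputable def omegaPG (t m : ℝ) : ℝ :=
  if t = 0 then m / 4 else m / (2 * t) * Real.tanh (t / 2)

/-- The penalized weighted observed log-likelihood
pℓ(β) = Σᵢ sᵢ[yᵢ xᵢᵀβ − mᵢ log(1 + exp(xᵢᵀβ))] − P(β). -/
noncomputable def pLogLik (n p : ℕ) (x : Fin n → Fin p → ℝ) (s m y : Fin n → ℝ)
    (P : (Fin p → ℝ) → ℝ) (β : Fin p → ℝ) : ℝ :=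
  (∑ i, s i * (y i * (x i ⬝ᵥ β) - m i * Real.log (1 + Real.exp (x i ⬝ᵥ β)))) - P β

/-- The penalized Pólya-Gamma Q-function at current iterate βₜ:
Q(β) = Σᵢ sᵢ uᵢ xᵢᵀβ − (1/2) Σᵢ sᵢ ω(xᵢᵀβₜ, mᵢ)(xᵢᵀβ)² − P(β), with uᵢ = yᵢ − mᵢ/2. -/
noncomputable def Qfun (n p : ℕ) (x : Fin n → Fin p → ℝ) (s m y : Fin n → ℝ)
    (P : (Fin p → ℝ) → ℝ) (βt : Fin p → ℝ) (β : Fin p → ℝ) : ℝ :=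
  (∑ i, s i * (y i - m i / 2) * (x i ⬝ᵥ β))
    - (1 / 2) * (∑ i, s i * omegaPG (x i ⬝ᵥ βt) (m i) * (x i ⬝ᵥ β) ^ 2) - P β

theorem antitoneOn_tanh_div_self : AntitoneOn (fun t : ℝ => Real.tanh t / t) (Set.Ioi 0) := by
  have hderiv : ∀ t ∈ Set.Ioi (0 : ℝ), HasDerivAt (fun t : ℝ => Real.tanh t / t)
      ((t - Real.sinh t * Real.cosh t) / (t * Real.cosh t) ^ 2) t := by
    intro t ht
    have ht0 : t ≠ 0 := ne_of_gt ht
    have hc := (Real.cosh_pos t).ne'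
    have hquot := ((Real.hasDerivAt_sinh t).div (Real.hasDerivAt_cosh t) hc).div
      (hasDerivAt_id t) ht0
    have hfun : (fun t : ℝ => Real.tanh t / t) = (Real.sinh / Real.cosh) / id := by
      funext u
      simp [Real.tanh_eq_sinh_div_cosh]
    rw [hfun]
    refine hquot.congr_deriv ?_
    simp only [Pi.div_apply, id]
    field_simp
    linear_combination t * Real.cosh_sq t
  refine antitoneOn_of_deriv_nonpos (convex_Ioi 0)
    (fun t ht => (hderiv t ht).continuousAt.continuousWithinAt) ?_ ?_
  · rw [interior_Ioi]
    exact fun t ht => (hderiv t ht).differentiableAt.differentiableWithinAt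
  · rw [interior_Ioi]
    intro t ht
    rw [(hderiv t ht).deriv]
    have ht0 : 0 ≤ t := le_of_lt ht
    have hsinh : t ≤ Real.sinh t := Real.self_le_sinh_iff.2 ht0
    exact div_nonpos_of_nonpos_of_nonneg
      (by nlinarith [Real.one_le_cosh t]) (sq_nonneg _)

/-- The quadratic tangent majorant of `log ∘ cosh` at `c`, on the positive half-line. -/
theorem log_cosh_le_quadratic_of_pos {c d : ℝ} (hc : 0 < c) (hd : 0 ≤ d) :
    Real.log (Real.cosh d) ≤
      Real.log (Real.cosh c) + Real.tanh c / (2 * c) * (d ^ 2 - c ^ 2) := by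
  set f : ℝ → ℝ := fun t => Real.tanh c / (2 * c) * (t ^ 2 - c ^ 2) - Real.log (Real.cosh t)
    with hf
  have hderiv : ∀ t, HasDerivAt f (Real.tanh c / c * t - Real.tanh t) t := by
    intro t
    have hlog := (Real.hasDerivAt_cosh t).log (Real.cosh_pos t).ne'
    refine ((((hasDerivAt_pow 2 t).sub_const (c ^ 2)).const_mul
      (Real.tanh c / (2 * c))).sub hlog).congr_deriv ?_
    rw [Real.tanh_eq_sinh_div_cosh t]
    field_simp
    norm_num
    ring
  have hcont : Continuous f :=
    continuous_iff_continuousAt.2 fun t => (hderiv t).continuousAt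
  have hdiff : Differentiable ℝ f := fun t => (hderiv t).differentiableAt
  have hcd : f c ≤ f d := by
    rcases le_total d c with h | h
    · refine antitoneOn_of_deriv_nonpos (convex_Icc 0 c) hcont.continuousOn
        hdiff.differentiableOn (fun t ht => ?_) ⟨hd, h⟩ ⟨hc.le, le_rfl⟩ h
      rw [interior_Icc] at ht
      have hle := antitoneOn_tanh_div_self ht.1 hc ht.2.le
      rw [(hderiv t).deriv, sub_nonpos]
      exact (le_div_iff₀ ht.1).1 hle
    · refine monotoneOn_of_deriv_nonneg (convex_Ici c) hcont.continuousOn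
        hdiff.differentiableOn (fun t ht => ?_) Set.self_mem_Ici h h
      rw [interior_Ici] at ht
      have ht0 : 0 < t := hc.trans ht
      have hle := antitoneOn_tanh_div_self hc ht0 (le_of_lt ht)
      rw [(hderiv t).deriv, sub_nonneg]
      exact (div_le_iff₀ ht0).1 hle
  simp only [hf, sub_self, mul_zero, zero_sub] at hcd
  linarith

theorem log_cosh_le_quadratic {c : ℝ} (hc : c ≠ 0) (d : ℝ) :
    Real.log (Real.cosh d) ≤
      Real.log (Real.cosh c) + Real.tanh c / (2 * c) * (d ^ 2 - c ^ 2) := by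
  have habs := log_cosh_le_quadratic_of_pos (abs_pos.2 hc) (abs_nonneg d)
  rw [Real.cosh_abs, Real.cosh_abs, sq_abs, sq_abs] at habs
  rcases abs_choice c with h | h
  · rwa [h] at habs
  · rwa [h, Real.tanh_neg, mul_neg, neg_div_neg_eq] at habs

theorem log_one_add_exp_eq_log_cosh (t : ℝ) :
    Real.log (1 + Real.exp t) = Real.log 2 + t / 2 + Real.log (Real.cosh (t / 2)) := by
  have hexp : 1 + Real.exp t = 2 * Real.exp (t / 2) * Real.cosh (t / 2) := by
    have hsq : Real.exp t = Real.exp (t / 2) * Real.exp (t / 2) := by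
      rw [← Real.exp_add, add_halves]
    have hinv : Real.exp (t / 2) * Real.exp (-(t / 2)) = 1 := by
      rw [← Real.exp_add, add_neg_cancel, Real.exp_zero]
    rw [Real.cosh_eq]
    linear_combination hsq - hinv
  rw [hexp, Real.log_mul (by positivity) (Real.cosh_pos _).ne',
    Real.log_mul two_ne_zero (Real.exp_ne_zero _), Real.log_exp]

/-- The Pólya-Gamma quadratic majorant of the softplus function, tangent at `a`. -/
theorem mul_log_one_add_exp_le {m : ℝ} (hm : 0 ≤ m) (a b : ℝ) :
    m * Real.log (1 + Real.exp b) ≤ m * Real.log (1 + Real.exp a) + m / 2 * (b - a)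
      + 1 / 2 * omegaPG a m * (b ^ 2 - a ^ 2) := by
  rw [log_one_add_exp_eq_log_cosh, log_one_add_exp_eq_log_cosh]
  by_cases ha : a = 0
  · subst ha
    have hcosh : Real.log (Real.cosh (b / 2)) ≤ (b / 2) ^ 2 / 2 :=
      (Real.log_le_iff_le_exp (Real.cosh_pos _)).2 (Real.cosh_le_exp_half_sq _)
    have hmul := mul_le_mul_of_nonneg_left hcosh hm
    simp only [omegaPG, if_true, zero_div, Real.cosh_zero, Real.log_one]
    linarith
  · have hmul := mul_le_mul_of_nonneg_left
      (log_cosh_le_quadratic (div_ne_zero ha two_ne_zero) (b / 2)) hm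
    have hquad : m * (Real.tanh (a / 2) / (2 * (a / 2)) * ((b / 2) ^ 2 - (a / 2) ^ 2)) =
        1 / 2 * (m / (2 * a) * Real.tanh (a / 2)) * (b ^ 2 - a ^ 2) := by
      field_simp
    simp only [omegaPG, if_neg ha]
    linarith

/-- The Q-function minorizes the penalized log-likelihood up to a constant. -/
theorem Qfun_sub_le_pLogLik_sub (n p : ℕ) (x : Fin n → Fin p → ℝ) (s m y : Fin n → ℝ)
    (hs : ∀ i, 0 ≤ s i) (hm : ∀ i, 0 ≤ m i) (P : (Fin p → ℝ) → ℝ) (βt β : Fin p → ℝ) :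
    Qfun n p x s m y P βt β - Qfun n p x s m y P βt βt ≤
      pLogLik n p x s m y P β - pLogLik n p x s m y P βt := by
  have hsum : ∑ i, (s i * (y i - m i / 2) * (x i ⬝ᵥ β)
        - 1 / 2 * (s i * omegaPG (x i ⬝ᵥ βt) (m i) * (x i ⬝ᵥ β) ^ 2)
        - (s i * (y i - m i / 2) * (x i ⬝ᵥ βt)
        - 1 / 2 * (s i * omegaPG (x i ⬝ᵥ βt) (m i) * (x i ⬝ᵥ βt) ^ 2))) ≤
      ∑ i, (s i * (y i * (x i ⬝ᵥ β) - m i * Real.log (1 + Real.exp (x i ⬝ᵥ β)))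
        - s i * (y i * (x i ⬝ᵥ βt) - m i * Real.log (1 + Real.exp (x i ⬝ᵥ βt)))) := by
    refine Finset.sum_le_sum fun i _ => ?_
    have hmul := mul_le_mul_of_nonneg_left
      (mul_log_one_add_exp_le (hm i) (x i ⬝ᵥ βt) (x i ⬝ᵥ β)) (hs i)
    linarith
  simp only [Finset.sum_sub_distrib, ← Finset.mul_sum] at hsum
  simp only [Qfun, pLogLik]
  linarith

/-- Each EM update increases the penalized weighted log-likelihood. -/
theorem em_update_increases_penalized_loglik (n p : ℕ) (x : Fin n → Fin p → ℝ)
    (s m y : Fin n → ℝ) (hs : ∀ i, 0 ≤ s i) (hm : ∀ i, 0 ≤ m i)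
    (P : (Fin p → ℝ) → ℝ) (βt β' : Fin p → ℝ)
    (hmax : ∀ β : Fin p → ℝ, Qfun n p x s m y P βt β ≤ Qfun n p x s m y P βt β') :
    pLogLik n p x s m y P β' ≥ pLogLik n p x s m y P βt := by
  have hminor := Qfun_sub_le_pLogLik_sub n p x s m y hs hm P βt β'
  linarith [hmax βt]
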